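/- Let p ∈ (0,1] and define the stationary coefficients φ⁰ = √p, φ¹ = −√p/2 and φᵏ = −((2k−3)! / ((k−2)!·k!·2^{2k−2}))·√p for k ≥ 2. Then for every n ∈ ℕ, ∑_{j=0}^{n} φʲ·φ^{n−j} equals p if n = 0, equals −p if n = 1, and equals 0 if n ≥ 2. -/

import Mathlib

/-!
For `m ≥ 1`, `(2m-1)! / ((m-1)! (m+1)!) = C_m / 2` with `C_m` the Catalan numbers. Hence the
coefficients are
`φ^{m+1} = -C_m √p / (2 · 4^m)`, i.e. the Taylor coefficients of `√p · √(1 - x)`, whose square is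
`p (1 - x)`. For `n = m + 2`, the two end terms of the convolution contribute
`-p C_{m+1} / 4^{m+1}`, and the interior terms `p / 4^{m+1} · ∑ C_j C_{m-j}`, so they cancel by
Segner's recurrence for the Catalan numbers (`catalan_succ`).
-/

open Real

/-- The stationary coefficients of the directed-chain Riccati system (with `ε = 1`):
`φ⁰ = √p`, `φ¹ = −√p/2`, and `φᵏ = −((2k−3)! / ((k−2)!·k!·2^{2k−2}))·√p` for `k ≥ 2`. -/
noncomputable def statPhi (p : ℝ) : ℕ → ℝ := fun k =>
  if k = 0 then Real.sqrt p
  else if k = 1 then -Real.sqrt p / 2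
  else -((Nat.factorial (2 * k - 3) : ℝ) /
    ((Nat.factorial (k - 2) : ℝ) * (Nat.factorial k : ℝ) * 2 ^ (2 * k - 2))) * Real.sqrt p

theorem statPhi_zero (p : ℝ) : statPhi p 0 = √p := by simp [statPhi]

/-- The closed form `C_m = (2m)! / (m! (m+1)!)`, without division. -/
theorem factorial_mul_catalan (m : ℕ) :
    (m + 1).factorial * m.factorial * catalan m = (2 * m).factorial := by
  have h1 := succ_mul_catalan_eq_centralBinom m
  have h2 := Nat.choose_mul_factorial_mul_factorial (show m ≤ 2 * m by omega)
  rw [← Nat.centralBinom_eq_two_mul_choose, ← h1, show 2 * m - m = m by omega] at h2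
  rw [← h2, Nat.factorial_succ]
  ring

/-- The stationary coefficients are rescaled Catalan numbers; this also covers `φ¹`, where the
factorial formula does not apply. -/
theorem statPhi_succ (p : ℝ) (m : ℕ) :
    statPhi p (m + 1) = -((catalan m : ℝ) / (2 * 4 ^ m)) * √p := by
  rcases m with _ | m
  · simp [statPhi]; ring
  · have h : ((m + 2).factorial : ℝ) * (m + 1).factorial * catalan (m + 1)
        = (2 * (m + 1)).factorial := by exact_mod_cast factorial_mul_catalan (m + 1)
    rw [show 2 * (m + 1) = (2 * m + 1) + 1 by ring, Nat.factorial_succ (2 * m + 1),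
      Nat.factorial_succ m] at h
    push_cast at h
    have hm : (m : ℝ) + 1 ≠ 0 := by positivity
    have hk : ((m + 2).factorial : ℝ) * m.factorial * catalan (m + 1)
        = 2 * (2 * m + 1).factorial := by
      apply mul_left_cancel₀ hm
      linear_combination h
    have e : (2 : ℝ) ^ (2 * (m + 1)) = 4 ^ (m + 1) := by rw [pow_mul]; norm_num
    have f1 : ((m + 2).factorial : ℝ) ≠ 0 := by positivity
    have f2 : (m.factorial : ℝ) ≠ 0 := by positivity
    simp only [statPhi, show m + 1 + 1 ≠ 0 by omega, show m + 1 + 1 ≠ 1 by omega, if_false,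
      show 2 * (m + 1 + 1) - 3 = 2 * m + 1 by omega, show m + 1 + 1 - 2 = m by omega,
      show 2 * (m + 1 + 1) - 2 = 2 * (m + 1) by omega, show m + 1 + 1 = m + 2 by omega, e]
    congr 2
    rw [div_eq_div_iff (by positivity) (by positivity)]
    linear_combination (-(4 : ℝ) ^ (m + 1)) * hk

/-- The stationary coefficients satisfy the convolution identities of the
directed-chain Riccati system: `∑_{j=0}^{n} φʲ·φ^{n−j}` equals `p` for `n = 0`,
`−p` for `n = 1`, and `0` for `n ≥ 2`. -/
theorem stmt_7 (p : ℝ) (hp : p ∈ Set.Ioc (0:ℝ) 1) (n : ℕ) :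
    ∑ j ∈ Finset.range (n + 1), statPhi p j * statPhi p (n - j) =
      if n = 0 then p else if n = 1 then -p else 0 := by
  have hs : √p * √p = p := Real.mul_self_sqrt hp.1.le
  rcases n with _ | _ | m
  · simp [statPhi_zero, hs]
  · have h1 : statPhi p 1 = -√p / 2 := by simp [statPhi]
    simp only [Finset.sum_range_succ, Finset.sum_range_zero]
    simp [statPhi_zero, h1]
    linear_combination -hs
  · have hc : (catalan (m + 1) : ℝ)
        = ∑ j ∈ Finset.range (m + 1), (catalan j : ℝ) * catalan (m - j) := by
      rw [catalan_succ, Fin.sum_univ_eq_sum_range (fun i => catalan i * catalan (m - i))]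
      push_cast
      rfl
    -- The interior terms of the convolution form a Catalan convolution.
    have hi : ∑ j ∈ Finset.range (m + 1), statPhi p (j + 1) * statPhi p (m + 2 - (j + 1))
        = p / 4 ^ (m + 1) * catalan (m + 1) := by
      rw [hc, Finset.mul_sum]
      refine Finset.sum_congr rfl fun j hj => ?_
      obtain ⟨i, rfl⟩ := Nat.exists_eq_add_of_le (Nat.lt_succ_iff.mp (Finset.mem_range.mp hj))
      rw [show j + i + 2 - (j + 1) = i + 1 by omega, show j + i - j = i by omega,
        statPhi_succ, statPhi_succ]
      -- Only the `p` outside the square roots, on the right-hand side, becomes `√p * √p`.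
      nth_rw 3 [← hs]
      rw [pow_succ, pow_add]
      field_simp
      ring
    rw [show m + 1 + 1 = m + 2 by rfl, Finset.sum_range_succ, Finset.sum_range_succ', hi]
    simp only [Nat.sub_zero, Nat.sub_self, statPhi_zero]
    rw [show m + 2 = (m + 1) + 1 by rfl, statPhi_succ]
    simp only [show m + 1 + 1 ≠ 0 by omega, show m + 1 + 1 ≠ 1 by omega, if_false]
    field_simp
    linear_combination (-2 * (catalan (m + 1) : ℝ)) * hs
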